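/- There are no finite chiral n-polytopes that are (1, n−3)-flat, and there are no finite chiral n-polytopes that are (2, n−2)-flat. -/

import Mathlib

open scoped Classical

/-- An abstract polytope of rank `n`: a partially ordered set with a unique minimal
element (of rank `-1`) and a unique maximal element (of rank `n`), all of whose
maximal chains (flags) have exactly `n + 2` elements, equipped with the induced
rank function, satisfying the diamond condition and strong connectivity. -/
structure AbstractPolytope (n : ℕ) where
  Face : Type
  [instPartialOrder : PartialOrder Face]
  rank : Face → ℤ
  bot : Face
  top : Face
  bot_le : ∀ F : Face, bot ≤ F
  le_top : ∀ F : Face, F ≤ top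
  rank_bot : rank bot = -1
  rank_top : rank top = n
  rank_strictMono : ∀ F G : Face, F < G → rank F < rank G
  flag_card : ∀ Φ : Flag Face, Nat.card Φ = n + 2
  flag_ranks : ∀ (Φ : Flag Face) (j : ℤ), -1 ≤ j → j ≤ (n : ℤ) →
    ∃ F ∈ Φ, rank F = j
  diamond : ∀ F G : Face, F < G → rank G = rank F + 2 →
    Nat.card {H : Face // F < H ∧ H < G} = 2
  strongly_connected : ∀ F G : Face, F < G → rank F + 3 ≤ rank G →
    ∀ H H' : Face, F < H → H < G → F < H' → H' < G →
    Relation.ReflTransGen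
      (fun A B : Face => F < A ∧ A < G ∧ F < B ∧ B < G ∧ (A ≤ B ∨ B ≤ A)) H H'

attribute [instance] AbstractPolytope.instPartialOrder

namespace AbstractPolytope

variable {n : ℕ} (P : AbstractPolytope n)

/-- The number of flags of `P`. -/
noncomputable def numFlags : ℕ := Nat.card (Flag P.Face)

/-- A vertex is a face of rank `0`. -/
def IsVertex (F : P.Face) : Prop := P.rank F = 0

/-- A facet is a face of rank `n - 1`. -/
def IsFacet (F : P.Face) : Prop := P.rank F = (n : ℤ) - 1

/-- The number of vertices of `P`. -/
noncomputable def numVertices : ℕ := Nat.card {F : P.Face // P.IsVertex F}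

/-- The number of facets of `P`. -/
noncomputable def numFacets : ℕ := Nat.card {F : P.Face // P.IsFacet F}

/-- Two faces are incident when they are comparable. -/
def Incident (F G : P.Face) : Prop := F ≤ G ∨ G ≤ F

/-- `P` is `(k, m)`-flat when every face of rank `k` is incident with every face of
rank `m`. -/
def IsKMFlat (k m : ℤ) : Prop :=
  ∀ F G : P.Face, P.rank F = k → P.rank G = m → P.Incident F G

/-- `P` is flat when every vertex is incident with every facet. -/
def IsFlat : Prop := P.IsKMFlat 0 ((n : ℤ) - 1)

/-- Two flags are adjacent when they differ in exactly one element. -/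
def AdjacentFlags (Φ Ψ : Flag P.Face) : Prop :=
  Φ ≠ Ψ ∧ ((Φ : Set P.Face) \ (Ψ : Set P.Face)).ncard = 1 ∧
    ((Ψ : Set P.Face) \ (Φ : Set P.Face)).ncard = 1

/-- Two flags lie in the same orbit of the automorphism group `Γ(P)` (the group of
order automorphisms of `P`). -/
def SameOrbit (Φ Ψ : Flag P.Face) : Prop :=
  ∃ f : P.Face ≃o P.Face, f '' (Φ : Set P.Face) = (Ψ : Set P.Face)

/-- `P` is regular when `Γ(P)` is transitive on flags. -/
def IsRegular : Prop := ∀ Φ Ψ : Flag P.Face, P.SameOrbit Φ Ψ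

/-- `P` is chiral when its flags fall into exactly two orbits under `Γ(P)` and
adjacent flags always lie in different orbits. -/
def IsChiral : Prop :=
  (∃ Φ₁ Φ₂ : Flag P.Face, ¬ P.SameOrbit Φ₁ Φ₂ ∧
      ∀ Φ : Flag P.Face, P.SameOrbit Φ Φ₁ ∨ P.SameOrbit Φ Φ₂) ∧
  ∀ Φ Ψ : Flag P.Face, P.AdjacentFlags Φ Ψ → ¬ P.SameOrbit Φ Ψ

/-- The polytope `Q` is (isomorphic to) the section `G/F` of `P`: there is an order
isomorphism from `Q` onto the interval `[F, G]` of `P`, shifting ranks by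
`rank F + 1`. -/
def IsSection {m : ℕ} (Q : AbstractPolytope m) (F G : P.Face) : Prop :=
  F ≤ G ∧ ∃ e : Q.Face ≃o (Set.Icc F G),
    ∀ x : Q.Face, P.rank (e x : P.Face) = Q.rank x + P.rank F + 1

/-- `P` is equivelar of Schläfli type `{p 1, …, p (n-1)}`: every section between a
face of rank `i - 2` and a face of rank `i + 1` is a polygon with exactly `p i`
vertices (i.e. it contains exactly `p i` faces of rank `i - 1`). -/
def IsSchlafli (p : ℕ → ℕ) : Prop :=
  ∀ i : ℕ, 1 ≤ i → i ≤ n - 1 →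
    ∀ F G : P.Face, F < G → P.rank F = (i : ℤ) - 2 → P.rank G = (i : ℤ) + 1 →
      Nat.card {H : P.Face // F < H ∧ H < G ∧ P.rank H = (i : ℤ) - 1} = p i

/-- `P` is tight of type `{p 1, …, p (n-1)}`: it is equivelar of that type and has
exactly `2 p₁ ⋯ p_{n-1}` flags. -/
def IsTight (p : ℕ → ℕ) : Prop :=
  P.IsSchlafli p ∧ P.numFlags = 2 * ∏ i ∈ Finset.Icc 1 (n - 1), p i

end AbstractPolytope

/-!
The monodromy group `M` is generated by the involutions `rᵢ` exchanging each flag with its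
`i`-adjacent flag. It commutes with the automorphisms, and by strong connectivity the orbits of the
subgroup `M(S)` generated by the `rᵢ` with `i ∈ S` are cut out by the faces of rank outside `S`.
Two flags with the same stabilizer in `M` lie in the same orbit of automorphisms. Hence, in a
chiral polytope,

* for every `i`, some element of `M` fixes a flag without commuting with `rᵢ`;
* an element of `M` that commutes with some `rᵢ` and fixes a flag is trivial, because it then fixes
  a flag of each of the two orbits.

In particular `M(< n - 2)`, which commutes with `rₙ₋₁`, acts freely on the flags. Suppose `P` is
`(k, m)`-flat with `1 ≤ k < m ≤ n - 3`. Flatness allows the faces of rank `≤ k` of one flag to be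
combined with the faces of rank `≥ m` of another, so freeness gives `M(≤ m) ⊆ M(> k) M(< m)`, and
then `M = M(> k) M(< m)` as the `rᵢ` with `i > m` commute with `M(< m)`. If `b * a` fixes a flag
`Φ`, with `b ∈ M(> k)` and `a ∈ M(< m)`, then `a Φ = b⁻¹ Φ` differs from `Φ` only in ranks strictly
between `k` and `m`, whence `a ∈ M(> k)` by freeness. So every element of `M` that fixes a flag
lies in `M(> k)` and commutes with `r₀`, a contradiction.

No chiral polytope has rank less than `3`. For `n = 3`, flatness in ranks `(1, 0)` would make `r₀`
central in `M`; for `n = 4`, two distinct edges are never incident. The pair `(2, n - 2)` is dual to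
`(1, n - 3)`.
-/

theorem exists_coe_eq_Ioo_of_ordConnected {S : Finset ℤ} (hS : (S : Set ℤ).OrdConnected) :
    ∃ i j : ℤ, (S : Set ℤ) = Set.Ioo i j := by
  rcases S.eq_empty_or_nonempty with rfl | hne
  · exact ⟨0, 0, by simp⟩
  · refine ⟨S.min' hne - 1, S.max' hne + 1, Set.Subset.antisymm (fun k hk => ?_) fun k hk => ?_⟩
    · have := S.min'_le k hk
      have := S.le_max' k hk
      constructor <;> omega
    · obtain ⟨h₁, h₂⟩ := hk
      exact hS.out (S.min'_mem hne) (S.max'_mem hne) ⟨by omega, by omega⟩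

theorem exists_perm_smul_comm_of_stabilizer_eq {G X : Type*} [Group G] [MulAction G X]
    [MulAction.IsPretransitive G X] {x y : X}
    (h : MulAction.stabilizer G x = MulAction.stabilizer G y) :
    ∃ φ : Equiv.Perm X, (∀ (g : G) z, φ (g • z) = g • φ z) ∧ φ x = y := by
  have smul_eq_iff (a b : G) : a • x = b • x ↔ a • y = b • y := by
    have := SetLike.ext_iff.1 h (b⁻¹ * a)
    simpa only [MulAction.mem_stabilizer_iff, mul_smul, inv_smul_eq_iff] using this
  choose g hg using MulAction.exists_smul_eq G x
  have apply_smul (a : G) : g (a • x) • y = a • y := (smul_eq_iff _ _).1 (hg _)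
  refine ⟨Equiv.ofBijective (fun z => g z • y) ⟨fun z z' hz => ?_, fun z => ?_⟩,
    fun a z => ?_, ?_⟩
  · rw [← hg z, ← hg z']
    exact (smul_eq_iff _ _).2 hz
  · obtain ⟨a, rfl⟩ := MulAction.exists_smul_eq G y z
    exact ⟨a • x, apply_smul a⟩
  · have := apply_smul (a * g z)
    rwa [mul_smul, hg, mul_smul] at this
  · have := apply_smul 1
    rwa [one_smul, one_smul] at this

/-- The identification of the flags of an order with the flags of its order dual. -/
def flagDual (α : Type*) [PartialOrder α] : Flag α ≃ Flag αᵒᵈ where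
  toFun Φ := ⟨OrderDual.ofDual ⁻¹' Φ, Φ.maxChain.symm.1, Φ.maxChain.symm.2⟩
  invFun Φ := ⟨OrderDual.toDual ⁻¹' Φ, Φ.maxChain.symm.1, Φ.maxChain.symm.2⟩

namespace AbstractPolytope

variable {n : ℕ} {P : AbstractPolytope n}

section Ranks

theorem strictMono_rank : StrictMono P.rank := fun _ _ h => P.rank_strictMono _ _ h

theorem neg_one_le_rank (F : P.Face) : -1 ≤ P.rank F :=
  P.rank_bot ▸ strictMono_rank.monotone (P.bot_le F)

theorem rank_le (F : P.Face) : P.rank F ≤ n :=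
  P.rank_top ▸ strictMono_rank.monotone (P.le_top F)

theorem Incident.symm {F G : P.Face} (h : P.Incident F G) : P.Incident G F := Or.symm h

theorem Incident.le_of_rank_le {F G : P.Face} (h : P.Incident F G) (hr : P.rank F ≤ P.rank G) :
    F ≤ G :=
  h.elim id fun hGF => not_lt_iff_le_imp_ge.1 (fun hlt => hr.not_gt (strictMono_rank hlt)) hGF

theorem Incident.eq_of_rank_eq {F G : P.Face} (h : P.Incident F G) (hr : P.rank F = P.rank G) :
    F = G :=
  (h.le_of_rank_le hr.le).antisymm (h.symm.le_of_rank_le hr.ge)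

theorem incident_of_mem {Φ : Flag P.Face} {F G : P.Face} (hF : F ∈ Φ) (hG : G ∈ Φ) :
    P.Incident F G :=
  Φ.le_or_le hF hG

theorem IsKMFlat.symm {k m : ℤ} (h : P.IsKMFlat k m) : P.IsKMFlat m k :=
  fun F G hF hG => (h G F hG hF).symm

end Ranks

section FlagFaces

variable (P) in
/-- The face of rank `j` of a flag. The rank is clamped to `[-1, n]`, so that `P.face Φ` is a
monotone function on all of `ℤ`. -/
noncomputable def face (Φ : Flag P.Face) (j : ℤ) : P.Face :=
  Classical.choose (P.flag_ranks Φ (max (-1) (min j n)) (by omega) (by omega))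

theorem face_mem (Φ : Flag P.Face) (j : ℤ) : P.face Φ j ∈ Φ :=
  (Classical.choose_spec (P.flag_ranks Φ (max (-1) (min j n)) (by omega) (by omega))).1

theorem rank_face (Φ : Flag P.Face) (j : ℤ) : P.rank (P.face Φ j) = max (-1) (min j n) :=
  (Classical.choose_spec (P.flag_ranks Φ (max (-1) (min j n)) (by omega) (by omega))).2

theorem rank_face_of_le (Φ : Flag P.Face) {j : ℤ} (hj : -1 ≤ j) (hjn : j ≤ n) :
    P.rank (P.face Φ j) = j := by
  rw [rank_face, min_eq_left hjn, max_eq_right hj]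

theorem face_eq_of_mem {Φ : Flag P.Face} {F : P.Face} {j : ℤ} (hF : F ∈ Φ)
    (hj : P.rank F = max (-1) (min j n)) : P.face Φ j = F :=
  (incident_of_mem (face_mem Φ j) hF).eq_of_rank_eq ((rank_face Φ j).trans hj.symm)

theorem face_rank {Φ : Flag P.Face} {F : P.Face} (hF : F ∈ Φ) : P.face Φ (P.rank F) = F := by
  have := neg_one_le_rank F
  have := rank_le F
  exact face_eq_of_mem hF (by omega)

theorem face_eq_face_of_mem {Φ Ψ : Flag P.Face} {j : ℤ} (h : P.face Φ j ∈ Ψ) :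
    P.face Ψ j = P.face Φ j :=
  face_eq_of_mem h (rank_face Φ j)

theorem face_monotone (Φ : Flag P.Face) : Monotone (P.face Φ) := fun i j hij =>
  (incident_of_mem (face_mem Φ i) (face_mem Φ j)).le_of_rank_le (by
    rw [rank_face, rank_face]
    omega)

theorem face_lt_face (Φ : Flag P.Face) {i j : ℤ} (hi : -1 ≤ i) (hij : i < j) (hj : j ≤ n) :
    P.face Φ i < P.face Φ j := by
  refine (face_monotone Φ hij.le).lt_of_ne fun h => ?_
  have := congrArg P.rank h
  rw [rank_face, rank_face] at this
  omega

theorem face_of_neg (Φ : Flag P.Face) {j : ℤ} (hj : j < 0) : P.face Φ j = P.bot :=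
  Incident.eq_of_rank_eq (Or.inr (P.bot_le _)) (by
    rw [rank_face, P.rank_bot]
    omega)

theorem face_of_le (Φ : Flag P.Face) {j : ℤ} (hj : (n : ℤ) ≤ j) : P.face Φ j = P.top :=
  Incident.eq_of_rank_eq (Or.inl (P.le_top _)) (by
    rw [rank_face, P.rank_top]
    omega)

theorem mem_Ico_of_face_ne {Φ Ψ : Flag P.Face} {j : ℤ} (h : P.face Φ j ≠ P.face Ψ j) :
    0 ≤ j ∧ j < n := by
  contrapose! h
  rcases lt_or_ge j 0 with hj | hj
  · rw [face_of_neg Φ hj, face_of_neg Ψ hj]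
  · rw [face_of_le Φ (h hj), face_of_le Ψ (h hj)]

theorem face_injective : Function.Injective P.face := by
  have subset {Φ Ψ : Flag P.Face} (h : P.face Φ = P.face Ψ) {F : P.Face} (hF : F ∈ Φ) : F ∈ Ψ := by
    rw [← face_rank hF, h]
    exact face_mem Ψ _
  exact fun Φ Ψ h => SetLike.ext fun F => ⟨subset h, subset h.symm⟩

theorem exists_flag_superset (Φ : Flag P.Face) {i j : ℤ} {c : Set P.Face}
    (hc : IsChain (· ≤ ·) c) (hcΦ : c ⊆ Set.Icc (P.face Φ i) (P.face Φ j)) :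
    ∃ Ψ : Flag P.Face, c ⊆ Ψ ∧ Set.EqOn (P.face Ψ) (P.face Φ) (Set.Ioo i j)ᶜ := by
  have cross : ∀ X ∈ c, ∀ k ∈ (Set.Ioo i j)ᶜ, X ≤ P.face Φ k ∨ P.face Φ k ≤ X := by
    intro X hX k hk
    rcases le_or_gt k i with hki | hik
    · exact Or.inr ((face_monotone Φ hki).trans (hcΦ hX).1)
    · exact Or.inl ((hcΦ hX).2.trans (face_monotone Φ (not_lt.1 fun hkj => hk ⟨hik, hkj⟩)))
  have hchain : IsChain (· ≤ ·) (c ∪ P.face Φ '' (Set.Ioo i j)ᶜ) := by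
    rintro X (hX | ⟨k, hk, rfl⟩) Y (hY | ⟨l, hl, rfl⟩) hXY
    · exact hc hX hY hXY
    · exact cross X hX l hl
    · exact (cross Y hY k hk).symm
    · exact Φ.le_or_le (face_mem Φ k) (face_mem Φ l)
  obtain ⟨Ψ, hΨ⟩ := hchain.exists_subset_flag
  exact ⟨Ψ, Set.subset_union_left.trans hΨ,
    fun k hk => face_eq_face_of_mem (hΨ (Or.inr ⟨k, hk, rfl⟩))⟩

theorem exists_flag_eqOn_Iic_eqOn_Ici {Φ Ψ : Flag P.Face} {k : ℤ}
    (h : P.face Φ k = P.face Ψ k) :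
    ∃ Λ : Flag P.Face, Set.EqOn (P.face Λ) (P.face Φ) (Set.Iic k) ∧
      Set.EqOn (P.face Λ) (P.face Ψ) (Set.Ici k) := by
  obtain ⟨Λ, hΨΛ, hΦΛ⟩ := exists_flag_superset Φ (i := k) (j := n)
    (c := P.face Ψ '' Set.Ici k)
    (by
      rintro _ ⟨i, -, rfl⟩ _ ⟨j, -, rfl⟩ -
      exact Ψ.le_or_le (face_mem Ψ i) (face_mem Ψ j))
    (by
      rintro _ ⟨j, hj, rfl⟩
      exact ⟨h ▸ face_monotone Ψ hj, face_of_le Φ le_rfl ▸ P.le_top _⟩)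
  exact ⟨Λ, fun j hj => hΦΛ fun hj' => hj'.1.not_ge hj,
    fun j hj => face_eq_face_of_mem (hΨΛ ⟨j, hj, rfl⟩)⟩

end FlagFaces

section Exchange

theorem existsUnique_ne_of_diamond {F G A : P.Face} (hFG : P.rank G = P.rank F + 2)
    (hFA : F < A) (hAG : A < G) : ∃! B, (F < B ∧ B < G) ∧ B ≠ A := by
  obtain ⟨B, hB, huniq⟩ := (Nat.card_eq_two_iff' (⟨A, hFA, hAG⟩ : {H // F < H ∧ H < G})).1
    (P.diamond F G (hFA.trans hAG) hFG)
  exact ⟨B, ⟨B.2, fun h => hB (Subtype.ext h)⟩,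
    fun C hC => congrArg Subtype.val (huniq ⟨C, hC.1⟩ fun h => hC.2 (congrArg Subtype.val h))⟩

theorem face_eq_of_face_ne {Φ Ψ Θ : Flag P.Face} {i : ℤ}
    (hΦpred : P.face Φ (i - 1) = P.face Θ (i - 1)) (hΦsucc : P.face Φ (i + 1) = P.face Θ (i + 1))
    (hΨpred : P.face Ψ (i - 1) = P.face Θ (i - 1)) (hΨsucc : P.face Ψ (i + 1) = P.face Θ (i + 1))
    (hΦ : P.face Φ i ≠ P.face Θ i) (hΨ : P.face Ψ i ≠ P.face Θ i) :
    P.face Φ i = P.face Ψ i := by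
  obtain ⟨hi, hin⟩ := mem_Ico_of_face_ne hΦ
  have between (Λ : Flag P.Face) : P.face Λ (i - 1) < P.face Λ i ∧ P.face Λ i < P.face Λ (i + 1) :=
    ⟨face_lt_face Λ (by omega) (by omega) (by omega),
      face_lt_face Λ (by omega) (by omega) (by omega)⟩
  have hrank : P.rank (P.face Θ (i + 1)) = P.rank (P.face Θ (i - 1)) + 2 := by
    rw [rank_face, rank_face]
    omega
  exact (existsUnique_ne_of_diamond hrank (between Θ).1 (between Θ).2).unique
    ⟨hΦpred ▸ hΦsucc ▸ between Φ, hΦ⟩ ⟨hΨpred ▸ hΨsucc ▸ between Ψ, hΨ⟩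

/-- Two flags are `i`-adjacent when they differ exactly in their faces of rank `i`. -/
def AdjacentAt (i : ℤ) (Φ Ψ : Flag P.Face) : Prop :=
  P.face Ψ i ≠ P.face Φ i ∧ Set.EqOn (P.face Ψ) (P.face Φ) {i}ᶜ

theorem AdjacentAt.symm {i : ℤ} {Φ Ψ : Flag P.Face} (h : AdjacentAt i Φ Ψ) : AdjacentAt i Ψ Φ :=
  ⟨h.1.symm, h.2.symm⟩

theorem AdjacentAt.unique {i : ℤ} {Φ Ψ Ψ' : Flag P.Face} (h : AdjacentAt i Φ Ψ)
    (h' : AdjacentAt i Φ Ψ') : Ψ = Ψ' := by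
  have hpred : i - 1 ∈ ({i}ᶜ : Set ℤ) := by simp
  have hsucc : i + 1 ∈ ({i}ᶜ : Set ℤ) := by simp
  refine face_injective (funext fun j => ?_)
  by_cases hj : j = i
  · subst hj
    exact face_eq_of_face_ne (h.2 hpred) (h.2 hsucc) (h'.2 hpred) (h'.2 hsucc) h.1 h'.1
  · exact (h.2 hj).trans (h'.2 hj).symm

theorem exists_adjacentAt {i : ℤ} (hi : 0 ≤ i) (hin : i < n) (Φ : Flag P.Face) :
    ∃ Ψ, AdjacentAt i Φ Ψ := by
  obtain ⟨H, ⟨⟨hpred, hsucc⟩, hne⟩, -⟩ := existsUnique_ne_of_diamond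
    (F := P.face Φ (i - 1)) (A := P.face Φ i) (G := P.face Φ (i + 1))
    (by rw [rank_face, rank_face]; omega)
    (face_lt_face Φ (by omega) (by omega) (by omega))
    (face_lt_face Φ (by omega) (by omega) (by omega))
  have hrank : P.rank H = i := by
    have h₁ := strictMono_rank hpred
    have h₂ := strictMono_rank hsucc
    rw [rank_face] at h₁ h₂
    omega
  obtain ⟨Ψ, hHΨ, hΦΨ⟩ := exists_flag_superset Φ (i := i - 1) (j := i + 1)
    (Set.subsingleton_singleton (a := H)).isChain
    (Set.singleton_subset_iff.2 ⟨hpred.le, hsucc.le⟩)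
  refine ⟨Ψ, ?_, fun j (hj : j ≠ i) => hΦΨ fun ⟨hj₁, hj₂⟩ => hj (by omega)⟩
  rwa [face_eq_of_mem (hHΨ rfl) (by omega)]

theorem AdjacentAt.adjacentFlags {i : ℤ} {Φ Ψ : Flag P.Face} (h : AdjacentAt i Φ Ψ) :
    P.AdjacentFlags Φ Ψ := by
  have diff_eq {Φ Ψ : Flag P.Face} (h : AdjacentAt i Φ Ψ) :
      (Φ : Set P.Face) \ Ψ = {P.face Φ i} := by
    ext F
    constructor
    · rintro ⟨hFΦ, hFΨ⟩
      by_contra hF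
      have hrank : P.rank F ≠ i := fun hr => hF (hr ▸ (face_rank hFΦ).symm)
      exact hFΨ (face_rank hFΦ ▸ h.2 hrank ▸ face_mem Ψ _)
    · rintro rfl
      exact ⟨face_mem Φ i, fun hmem => h.1 (face_eq_face_of_mem hmem)⟩
  exact ⟨fun he => h.1 (he ▸ rfl), Set.ncard_eq_one.2 ⟨_, diff_eq h⟩,
    Set.ncard_eq_one.2 ⟨_, diff_eq h.symm⟩⟩

/-- The `i`-adjacent flag, or the flag itself when there is none, i.e. unless `0 ≤ i < n`. -/
noncomputable def adjacentFlag (i : ℤ) (Φ : Flag P.Face) : Flag P.Face :=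
  if h : ∃ Ψ, AdjacentAt i Φ Ψ then h.choose else Φ

theorem AdjacentAt.adjacentFlag_eq {i : ℤ} {Φ Ψ : Flag P.Face} (h : AdjacentAt i Φ Ψ) :
    adjacentFlag i Φ = Ψ := by
  have hex : ∃ Ψ, AdjacentAt i Φ Ψ := ⟨Ψ, h⟩
  rw [adjacentFlag, dif_pos hex]
  exact hex.choose_spec.unique h

theorem adjacentFlag_involutive (i : ℤ) : Function.Involutive (adjacentFlag (P := P) i) := by
  intro Φ
  by_cases h : ∃ Ψ, AdjacentAt i Φ Ψ
  · obtain ⟨Ψ, hΨ⟩ := h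
    rw [hΨ.adjacentFlag_eq, hΨ.symm.adjacentFlag_eq]
  · have hfix : adjacentFlag i Φ = Φ := dif_neg h
    rw [hfix, hfix]

variable (P) in
/-- The generator `rᵢ` of the monodromy group: it exchanges every flag with its `i`-adjacent
flag, and is the identity unless `0 ≤ i < n`. -/
noncomputable def exchange (i : ℤ) : Equiv.Perm (Flag P.Face) :=
  (adjacentFlag_involutive i).toPerm

theorem AdjacentAt.exchange_eq {i : ℤ} {Φ Ψ : Flag P.Face} (h : AdjacentAt i Φ Ψ) :
    P.exchange i Φ = Ψ :=
  h.adjacentFlag_eq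

theorem adjacentAt_exchange {i : ℤ} (hi : 0 ≤ i) (hin : i < n) (Φ : Flag P.Face) :
    AdjacentAt i Φ (P.exchange i Φ) := by
  obtain ⟨Ψ, hΨ⟩ := exists_adjacentAt hi hin Φ
  rwa [hΨ.exchange_eq]

theorem exchange_eq_one {i : ℤ} (h : ¬(0 ≤ i ∧ i < n)) : P.exchange i = 1 := by
  ext1 Φ
  exact dif_neg fun ⟨_, hΨ⟩ => h (mem_Ico_of_face_ne hΨ.1)

theorem exchange_exchange (i : ℤ) (Φ : Flag P.Face) : P.exchange i (P.exchange i Φ) = Φ :=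
  adjacentFlag_involutive i Φ

theorem exchange_mul_self (i : ℤ) : P.exchange i * P.exchange i = 1 :=
  Equiv.ext (exchange_exchange i)

theorem exchange_inv (i : ℤ) : (P.exchange i)⁻¹ = P.exchange i :=
  inv_eq_of_mul_eq_one_left (exchange_mul_self i)

theorem face_exchange_of_ne {i j : ℤ} (h : j ≠ i) (Φ : Flag P.Face) :
    P.face (P.exchange i Φ) j = P.face Φ j := by
  by_cases hi : 0 ≤ i ∧ i < (n : ℤ)
  · exact (adjacentAt_exchange hi.1 hi.2 Φ).2 h
  · rw [exchange_eq_one hi, Equiv.Perm.one_apply]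

theorem face_exchange_congr {i : ℤ} {Φ Ψ : Flag P.Face}
    (hpred : P.face Φ (i - 1) = P.face Ψ (i - 1)) (hmid : P.face Φ i = P.face Ψ i)
    (hsucc : P.face Φ (i + 1) = P.face Ψ (i + 1)) :
    P.face (P.exchange i Φ) i = P.face (P.exchange i Ψ) i := by
  by_cases hi : 0 ≤ i ∧ i < (n : ℤ)
  · have hpred_ne : i - 1 ≠ i := by omega
    have hsucc_ne : i + 1 ≠ i := by omega
    refine face_eq_of_face_ne (Θ := Ψ) ?_ ?_ (face_exchange_of_ne hpred_ne Ψ)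
      (face_exchange_of_ne hsucc_ne Ψ) ?_ (adjacentAt_exchange hi.1 hi.2 Ψ).1
    · rw [face_exchange_of_ne hpred_ne, hpred]
    · rw [face_exchange_of_ne hsucc_ne, hsucc]
    · rw [← hmid]
      exact (adjacentAt_exchange hi.1 hi.2 Φ).1
  · rwa [exchange_eq_one hi, Equiv.Perm.one_apply, Equiv.Perm.one_apply]

theorem commute_exchange_of_face_eq {i j : ℤ} (hij : i ≠ j)
    (hi : ∀ Φ, P.face (P.exchange i (P.exchange j Φ)) i = P.face (P.exchange i Φ) i) :
    Commute (P.exchange i) (P.exchange j) := by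
  by_cases hj : 0 ≤ j ∧ j < (n : ℤ)
  · ext1 Φ
    refine (AdjacentAt.exchange_eq ⟨?_, fun k hk => ?_⟩).symm
    · rw [Equiv.Perm.mul_apply, face_exchange_of_ne hij.symm, face_exchange_of_ne hij.symm]
      exact (adjacentAt_exchange hj.1 hj.2 Φ).1
    · rcases eq_or_ne k i with rfl | hki
      · exact hi Φ
      · rw [Equiv.Perm.mul_apply, face_exchange_of_ne hki, face_exchange_of_ne hk,
          face_exchange_of_ne hki]
  · rw [exchange_eq_one hj]
    exact Commute.one_right _

theorem commute_exchange {i j : ℤ} (h : i + 2 ≤ j ∨ j + 2 ≤ i) :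
    Commute (P.exchange i) (P.exchange j) :=
  commute_exchange_of_face_eq (by omega) fun Φ =>
    face_exchange_congr (face_exchange_of_ne (by omega) Φ) (face_exchange_of_ne (by omega) Φ)
      (face_exchange_of_ne (by omega) Φ)

end Exchange

section Monodromy

variable (P) in
/-- The subgroup of the monodromy group generated by the `rᵢ` with `i ∈ S`; the whole monodromy
group is `P.monodromy Set.univ`. -/
noncomputable def monodromy (S : Set ℤ) : Subgroup (Equiv.Perm (Flag P.Face)) :=
  Subgroup.closure (P.exchange '' S)

theorem exchange_mem_monodromy {S : Set ℤ} {i : ℤ} (hi : i ∈ S) : P.exchange i ∈ P.monodromy S :=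
  Subgroup.subset_closure (Set.mem_image_of_mem _ hi)

theorem monodromy_mono {S T : Set ℤ} (h : S ⊆ T) : P.monodromy S ≤ P.monodromy T :=
  Subgroup.closure_mono (Set.image_mono h)

theorem commute_of_mem_monodromy {S : Set ℤ} {x w : Equiv.Perm (Flag P.Face)}
    (hx : ∀ i ∈ S, Commute x (P.exchange i)) (hw : w ∈ P.monodromy S) : Commute w x := by
  have hle : P.monodromy S ≤ Subgroup.centralizer {x} :=
    (Subgroup.closure_le _).2 (by
      rintro _ ⟨i, hi, rfl⟩
      exact Subgroup.mem_centralizer_singleton_iff.2 (hx i hi).symm)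
  exact Subgroup.mem_centralizer_singleton_iff.1 (hle hw)

theorem monodromy_induction {S : Set ℤ} {p : Equiv.Perm (Flag P.Face) → Prop} (one : p 1)
    (mul_exchange : ∀ w ∈ P.monodromy S, ∀ i ∈ S, p w → p (w * P.exchange i))
    {w : Equiv.Perm (Flag P.Face)} (hw : w ∈ P.monodromy S) : p w := by
  refine Subgroup.closure_induction_right (p := fun w _ => p w) one ?_ ?_ hw
  · rintro w hw _ ⟨i, hi, rfl⟩
    exact mul_exchange w hw i hi
  · rintro w hw _ ⟨i, hi, rfl⟩
    rw [exchange_inv]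
    exact mul_exchange w hw i hi

theorem eqOn_face_of_mem_monodromy {S : Set ℤ} {w : Equiv.Perm (Flag P.Face)}
    (hw : w ∈ P.monodromy S) (Φ : Flag P.Face) : Set.EqOn (P.face (w Φ)) (P.face Φ) Sᶜ := by
  revert Φ
  refine monodromy_induction (p := fun w => ∀ Φ, Set.EqOn (P.face (w Φ)) (P.face Φ) Sᶜ)
    (fun _ _ _ => rfl) (fun w _ i hi ih Φ k hk => ?_) hw
  exact (ih _ hk).trans (face_exchange_of_ne (ne_of_mem_of_not_mem hi hk).symm Φ)

end Monodromy

section Connectivity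

theorem mem_orbit_monodromy_of_eqOn_compl_singleton {S : Set ℤ} {i : ℤ} (hi : i ∈ S)
    {Φ Ψ : Flag P.Face} (h : Set.EqOn (P.face Ψ) (P.face Φ) {i}ᶜ) :
    Ψ ∈ MulAction.orbit (P.monodromy S) Φ := by
  by_cases hne : P.face Ψ i = P.face Φ i
  · have heq : Ψ = Φ := face_injective (funext fun k =>
      if hk : k = i then hk ▸ hne else h hk)
    rw [heq]
    exact MulAction.mem_orbit_self Φ
  · exact ⟨⟨P.exchange i, exchange_mem_monodromy hi⟩, AdjacentAt.exchange_eq ⟨hne, h⟩⟩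

theorem mem_orbit_monodromy_Ioo_of_share {i j : ℤ} (hi : -1 ≤ i) (hij : i + 3 ≤ j) (hj : j ≤ n)
    (share : ∀ {Θ Θ' : Flag P.Face}, Set.EqOn (P.face Θ') (P.face Θ) (Set.Ioo i j)ᶜ →
      ∀ k ∈ Set.Ioo i j, P.face Θ' k = P.face Θ k →
        Θ' ∈ MulAction.orbit (P.monodromy (Set.Ioo i j)) Θ)
    {Φ Ψ : Flag P.Face} (h : Set.EqOn (P.face Ψ) (P.face Φ) (Set.Ioo i j)ᶜ) :
    Ψ ∈ MulAction.orbit (P.monodromy (Set.Ioo i j)) Φ := by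
  have hmem : i + 1 ∈ Set.Ioo i j := by
    constructor <;> omega
  have between {Λ : Flag P.Face} (hΛ : Set.EqOn (P.face Λ) (P.face Φ) (Set.Ioo i j)ᶜ) :
      P.face Φ i < P.face Λ (i + 1) ∧ P.face Λ (i + 1) < P.face Φ j := by
    rw [← hΛ (x := i) (by simp), ← hΛ (x := j) (by simp)]
    exact ⟨face_lt_face Λ (by omega) (by omega) (by omega),
      face_lt_face Λ (by omega) (by omega) (by omega)⟩
  have reach {B : P.Face}
      (hB : Relation.ReflTransGen (fun A B : P.Face => P.face Φ i < A ∧ A < P.face Φ j ∧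
        P.face Φ i < B ∧ B < P.face Φ j ∧ (A ≤ B ∨ B ≤ A)) (P.face Φ (i + 1)) B) :
      ∀ {Λ : Flag P.Face}, Set.EqOn (P.face Λ) (P.face Φ) (Set.Ioo i j)ᶜ → B ∈ Λ →
        Λ ∈ MulAction.orbit (P.monodromy (Set.Ioo i j)) Φ := by
    induction hB with
    | refl => exact fun hΛ hmemΛ => share hΛ _ hmem (face_eq_face_of_mem hmemΛ)
    | @tail A B _ hAB ih =>
      intro Λ hΛ hBΛ
      obtain ⟨hiA, hAj, hiB, hBj, hinc⟩ := hAB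
      obtain ⟨Θ, hΘ, hΘΦ⟩ := exists_flag_superset Φ (c := {A, B}) (i := i) (j := j)
        (hinc.elim IsChain.pair fun hBA => Set.pair_comm A B ▸ IsChain.pair hBA)
        (Set.insert_subset ⟨hiA.le, hAj.le⟩ (Set.singleton_subset_iff.2 ⟨hiB.le, hBj.le⟩))
      have hrank : P.rank B ∈ Set.Ioo i j := by
        have h₁ := strictMono_rank hiB
        have h₂ := strictMono_rank hBj
        rw [rank_face] at h₁ h₂
        constructor <;> omega
      have hΛΘ : Λ ∈ MulAction.orbit (P.monodromy (Set.Ioo i j)) Θ :=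
        share (hΛ.trans hΘΦ.symm) _ hrank
          ((face_rank hBΛ).trans (face_rank (hΘ (by simp))).symm)
      exact MulAction.orbit_eq_iff.2 (ih hΘΦ (hΘ (by simp))) ▸ hΛΘ
  refine reach (P.strongly_connected _ _ ?_ ?_ _ _ (between fun _ _ => rfl).1
    (between fun _ _ => rfl).2 (between h).1 (between h).2) h (face_mem Ψ _)
  · exact face_lt_face Φ hi (by omega) hj
  · rw [rank_face, rank_face]
    omega

theorem mem_orbit_monodromy_finset (S : Finset ℤ) {Φ Ψ : Flag P.Face}
    (h : Set.EqOn (P.face Ψ) (P.face Φ) (S : Set ℤ)ᶜ) :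
    Ψ ∈ MulAction.orbit (P.monodromy S) Φ := by
  induction S using Finset.strongInduction generalizing Φ Ψ with | H S ih => ?_
  have share {Θ Θ' : Flag P.Face} (hΘ : Set.EqOn (P.face Θ') (P.face Θ) (S : Set ℤ)ᶜ) (k : ℤ)
      (hk : k ∈ (S : Set ℤ)) (hΘk : P.face Θ' k = P.face Θ k) :
      Θ' ∈ MulAction.orbit (P.monodromy S) Θ := by
    obtain ⟨w, hw⟩ := ih (S.erase k) (Finset.erase_ssubset hk) (Φ := Θ) (Ψ := Θ') fun l hl =>
      if hlk : l = k then hlk ▸ hΘk else hΘ fun hlS => hl (Finset.mem_erase.2 ⟨hlk, hlS⟩)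
    exact ⟨⟨w, monodromy_mono (S.erase_subset k) w.2⟩, hw⟩
  by_cases hagree : ∃ k ∈ (S : Set ℤ), P.face Ψ k = P.face Φ k
  · obtain ⟨k, hk, hΨΦ⟩ := hagree
    exact share h k hk hΨΦ
  push Not at hagree
  by_cases hS : (S : Set ℤ).OrdConnected
  · obtain ⟨i, j, hSij⟩ := exists_coe_eq_Ioo_of_ordConnected hS
    rw [hSij] at h hagree share ⊢
    rcases lt_trichotomy j (i + 2) with hlt | rfl | hgt
    · have heq : Ψ = Φ := face_injective (funext fun k => h fun hk => by
        obtain ⟨hik, hkj⟩ := hk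
        omega)
      rw [heq]
      exact MulAction.mem_orbit_self Φ
    · refine mem_orbit_monodromy_of_eqOn_compl_singleton (i := i + 1) (by simp) ?_
      exact fun k (hk : k ≠ i + 1) => h fun ⟨hik, hki⟩ => hk (by omega)
    · have hi := mem_Ico_of_face_ne (hagree (i + 1) ⟨by omega, by omega⟩)
      have hj := mem_Ico_of_face_ne (hagree (j - 1) ⟨by omega, by omega⟩)
      exact mem_orbit_monodromy_Ioo_of_share (by omega) (by omega) (by omega) share h
  · obtain ⟨a, ha, b, hb, k, hk, hkS⟩ : ∃ a ∈ S, ∃ b ∈ S, ∃ k ∈ Set.Icc a b, k ∉ S := by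
      contrapose! hS
      exact ⟨fun a ha b hb k hk => hS a ha b hb k hk⟩
    obtain ⟨Λ, hΛΦ, hΛΨ⟩ := exists_flag_eqOn_Iic_eqOn_Ici (h hkS).symm
    have hΛ : Set.EqOn (P.face Λ) (P.face Φ) (S : Set ℤ)ᶜ := fun l hl =>
      (le_total l k).elim (fun hlk => hΛΦ hlk) fun hkl => (hΛΨ hkl).trans (h hl)
    exact MulAction.orbit_eq_iff.2 (share hΛ a ha (hΛΦ hk.1)) ▸
      share (h.trans hΛ.symm) b hb (hΛΨ hk.2).symm

theorem mem_orbit_monodromy_iff {S : Set ℤ} {Φ Ψ : Flag P.Face} :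
    Ψ ∈ MulAction.orbit (P.monodromy S) Φ ↔ Set.EqOn (P.face Ψ) (P.face Φ) Sᶜ := by
  constructor
  · rintro ⟨w, rfl⟩
    exact eqOn_face_of_mem_monodromy w.2 Φ
  · intro h
    have hfin : Set.EqOn (P.face Ψ) (P.face Φ)
        (((Finset.Ico 0 (n : ℤ)).filter (· ∈ S) : Finset ℤ) : Set ℤ)ᶜ := by
      intro k hk
      by_contra hne
      exact hk (Finset.mem_filter.2 ⟨Finset.mem_Ico.2 (mem_Ico_of_face_ne hne),
        by_contra fun hkS => hne (h hkS)⟩)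
    obtain ⟨w, hw⟩ := mem_orbit_monodromy_finset _ hfin
    exact ⟨⟨w, monodromy_mono (fun _ hk => (Finset.mem_filter.1 hk).2) w.2⟩, hw⟩

theorem exists_mem_monodromy_apply_eq {S : Set ℤ} {Φ Ψ : Flag P.Face}
    (h : Set.EqOn (P.face Ψ) (P.face Φ) Sᶜ) : ∃ w ∈ P.monodromy S, w Φ = Ψ := by
  obtain ⟨w, hw⟩ := mem_orbit_monodromy_iff.2 h
  exact ⟨w, w.2, hw⟩

end Connectivity

section Automorphisms

theorem rank_apply (f : P.Face ≃o P.Face) (F : P.Face) : P.rank (f F) = P.rank F := by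
  have rank_le_rank_apply (f : P.Face ≃o P.Face) (F : P.Face) : P.rank F ≤ P.rank (f F) := by
    obtain ⟨Φ, hF⟩ := Flag.exists_mem F
    have hface (j : ℤ) (hj : -1 ≤ j) : j ≤ n → j ≤ P.rank (f (P.face Φ j)) := by
      induction j, hj using Int.leInduction with
      | base => exact fun _ => neg_one_le_rank _
      | succ j hj ih =>
        intro hjn
        have hlt := strictMono_rank (f.strictMono (face_lt_face Φ hj (lt_add_one j) hjn))
        have := ih (by omega)
        omega
    simpa only [face_rank hF] using hface (P.rank F) (neg_one_le_rank F) (rank_le F)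
  refine le_antisymm ?_ (rank_le_rank_apply f F)
  simpa only [OrderIso.symm_apply_apply] using rank_le_rank_apply f.symm (f F)

theorem face_smul (f : P.Face ≃o P.Face) (Φ : Flag P.Face) (j : ℤ) :
    P.face (f • Φ) j = f (P.face Φ j) :=
  face_eq_of_mem (Set.mem_image_of_mem f (face_mem Φ j)) ((rank_apply f _).trans (rank_face Φ j))

theorem exchange_smul (i : ℤ) (f : P.Face ≃o P.Face) (Φ : Flag P.Face) :
    P.exchange i (f • Φ) = f • P.exchange i Φ := by
  by_cases hi : 0 ≤ i ∧ i < (n : ℤ)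
  · refine AdjacentAt.exchange_eq ⟨?_, fun k hk => ?_⟩
    · rw [face_smul, face_smul]
      exact f.injective.ne (adjacentAt_exchange hi.1 hi.2 Φ).1
    · rw [face_smul, face_smul, face_exchange_of_ne hk]
  · rw [exchange_eq_one hi, Equiv.Perm.one_apply, Equiv.Perm.one_apply]

theorem apply_smul_of_mem_monodromy {S : Set ℤ} {w : Equiv.Perm (Flag P.Face)}
    (hw : w ∈ P.monodromy S) (f : P.Face ≃o P.Face) (Φ : Flag P.Face) :
    w (f • Φ) = f • w Φ :=
  DFunLike.congr_fun (commute_of_mem_monodromy (x := MulAction.toPerm f)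
    (fun i _ => Equiv.ext fun Ψ => (exchange_smul i f Ψ).symm) hw).eq Φ

theorem face_apply_congr {φ : Equiv.Perm (Flag P.Face)} (hφ : ∀ i, Commute φ (P.exchange i))
    {Φ Ψ : Flag P.Face} {j : ℤ} (h : P.face Φ j = P.face Ψ j) :
    P.face (φ Φ) j = P.face (φ Ψ) j := by
  obtain ⟨w, hw, rfl⟩ : ∃ w ∈ P.monodromy {j}ᶜ, w Φ = Ψ :=
    exists_mem_monodromy_apply_eq (by simpa using h.symm)
  have hφw : φ (w Φ) = w (φ Φ) :=
    DFunLike.congr_fun (commute_of_mem_monodromy (fun i _ => hφ i) hw).symm.eq Φ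
  rw [hφw]
  exact (eqOn_face_of_mem_monodromy hw (φ Φ) (by simp)).symm

theorem exists_monotone_apply_face {φ : Equiv.Perm (Flag P.Face)}
    (hφ : ∀ i, Commute φ (P.exchange i)) :
    ∃ g : P.Face → P.Face, Monotone g ∧ ∀ Φ j, g (P.face Φ j) = P.face (φ Φ) j := by
  choose flagOf mem_flagOf using fun F : P.Face => Flag.exists_mem F
  have hmem {Φ : Flag P.Face} {F : P.Face} (hF : F ∈ Φ) :
      P.face (φ (flagOf F)) (P.rank F) = P.face (φ Φ) (P.rank F) :=
    face_apply_congr hφ ((face_rank (mem_flagOf F)).trans (face_rank hF).symm)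
  refine ⟨fun F => P.face (φ (flagOf F)) (P.rank F), fun F G hFG => ?_, fun Φ j => ?_⟩
  · obtain ⟨Φ, hF, hG⟩ := Flag.exists_mem_mem hFG
    simpa only [hmem hF, hmem hG] using face_monotone (φ Φ) (strictMono_rank.monotone hFG)
  · refine (hmem (face_mem Φ j)).trans (face_eq_of_mem (face_mem _ j) ?_)
    rw [rank_face, rank_face]
    omega

theorem exists_smul_eq_of_commute {φ : Equiv.Perm (Flag P.Face)}
    (hφ : ∀ i, Commute φ (P.exchange i)) : ∃ f : P.Face ≃o P.Face, ∀ Φ, f • Φ = φ Φ := by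
  obtain ⟨g, hg, hgφ⟩ := exists_monotone_apply_face hφ
  obtain ⟨g', hg', hgφ'⟩ := exists_monotone_apply_face fun i => (hφ i).inv_left
  have eq_face (F : P.Face) : ∃ Φ j, P.face Φ j = F :=
    (Flag.exists_mem F).imp fun _ hF => ⟨_, face_rank hF⟩
  have left_inv : Function.LeftInverse g' g := by
    intro F
    obtain ⟨Φ, j, rfl⟩ := eq_face F
    rw [hgφ, hgφ', Equiv.Perm.inv_def, Equiv.symm_apply_apply]
  have right_inv : Function.RightInverse g' g := by
    intro F
    obtain ⟨Φ, j, rfl⟩ := eq_face F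
    rw [hgφ', hgφ, Equiv.Perm.inv_def, Equiv.apply_symm_apply]
  let f : P.Face ≃o P.Face := Equiv.toOrderIso ⟨g, g', left_inv, right_inv⟩ hg hg'
  exact ⟨f, fun Φ => face_injective (funext fun j => (face_smul f Φ j).trans (hgφ Φ j))⟩

theorem sameOrbit_iff_mem_orbit {Φ Ψ : Flag P.Face} :
    P.SameOrbit Φ Ψ ↔ Ψ ∈ MulAction.orbit (P.Face ≃o P.Face) Φ :=
  exists_congr fun f => SetLike.coe_set_eq (p := f • Φ)

theorem SameOrbit.refl (Φ : Flag P.Face) : P.SameOrbit Φ Φ :=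
  sameOrbit_iff_mem_orbit.2 (MulAction.mem_orbit_self Φ)

theorem SameOrbit.symm {Φ Ψ : Flag P.Face} (h : P.SameOrbit Φ Ψ) : P.SameOrbit Ψ Φ :=
  sameOrbit_iff_mem_orbit.2 (MulAction.mem_orbit_symm.1 (sameOrbit_iff_mem_orbit.1 h))

theorem SameOrbit.trans {Φ Ψ Λ : Flag P.Face} (h : P.SameOrbit Φ Ψ) (h' : P.SameOrbit Ψ Λ) :
    P.SameOrbit Φ Λ := by
  rw [sameOrbit_iff_mem_orbit] at *
  rwa [← MulAction.orbit_eq_iff.2 h]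

instance isPretransitive_monodromy_univ :
    MulAction.IsPretransitive (P.monodromy Set.univ) (Flag P.Face) :=
  ⟨fun _ _ => mem_orbit_monodromy_iff.2 (by simp)⟩

theorem sameOrbit_of_forall_monodromy {Φ Ψ : Flag P.Face}
    (h : ∀ w ∈ P.monodromy Set.univ, w Φ = Φ ↔ w Ψ = Ψ) : P.SameOrbit Φ Ψ := by
  obtain ⟨φ, hφ, rfl⟩ := exists_perm_smul_comm_of_stabilizer_eq (G := P.monodromy Set.univ)
    (x := Φ) (y := Ψ) (Subgroup.ext fun w => h w w.2)
  obtain ⟨f, hf⟩ := exists_smul_eq_of_commute (φ := φ) fun i =>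
    Equiv.ext fun Θ => hφ ⟨_, exchange_mem_monodromy (Set.mem_univ i)⟩ Θ
  exact sameOrbit_iff_mem_orbit.2 ⟨f, hf Φ⟩

end Automorphisms

section Chirality

theorem IsChiral.not_sameOrbit_exchange (h : P.IsChiral) {i : ℤ} (hi : 0 ≤ i) (hin : i < n)
    (Φ : Flag P.Face) : ¬P.SameOrbit Φ (P.exchange i Φ) :=
  h.2 _ _ (adjacentAt_exchange hi hin Φ).adjacentFlags

theorem IsChiral.sameOrbit_of_not_sameOrbit (h : P.IsChiral) {Φ Ψ Λ : Flag P.Face}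
    (hΦΨ : ¬P.SameOrbit Φ Ψ) (hΨΛ : ¬P.SameOrbit Ψ Λ) : P.SameOrbit Φ Λ := by
  obtain ⟨⟨Φ₁, Φ₂, -, hor⟩, -⟩ := h
  have together {A B C : Flag P.Face} (hA : P.SameOrbit A C) (hB : P.SameOrbit B C) :
      P.SameOrbit A B := hA.trans hB.symm
  rcases hor Φ with hΦ | hΦ <;> rcases hor Ψ with hΨ | hΨ <;> rcases hor Λ with hΛ | hΛ <;>
    first
    | exact together hΦ hΛ
    | exact absurd (together hΦ hΨ) hΦΨ
    | exact absurd (together hΨ hΛ) hΨΛ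

theorem IsChiral.exists_monodromy_apply_exchange_ne (h : P.IsChiral) {i : ℤ} (hi : 0 ≤ i)
    (hin : i < n) : ∃ w ∈ P.monodromy Set.univ, ∃ Φ, w Φ = Φ ∧
      w (P.exchange i Φ) ≠ P.exchange i Φ := by
  by_contra! hfix
  obtain ⟨Φ, -⟩ := h.1
  refine h.not_sameOrbit_exchange hi hin Φ (sameOrbit_of_forall_monodromy fun w hw =>
    ⟨hfix w hw Φ, fun hwΦ => ?_⟩)
  simpa only [exchange_exchange] using hfix w hw _ hwΦ

theorem IsChiral.exists_not_commute_exchange (h : P.IsChiral) {i : ℤ} (hi : 0 ≤ i) (hin : i < n) :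
    ∃ w ∈ P.monodromy Set.univ, (∃ Φ, w Φ = Φ) ∧ ¬Commute w (P.exchange i) := by
  obtain ⟨w, hw, Φ, hwΦ, hne⟩ := h.exists_monodromy_apply_exchange_ne hi hin
  refine ⟨w, hw, ⟨Φ, hwΦ⟩, fun hcomm => hne ?_⟩
  simpa only [Equiv.Perm.mul_apply, hwΦ] using DFunLike.congr_fun hcomm.eq Φ

theorem IsChiral.eq_one_of_commute_exchange (h : P.IsChiral) {i : ℤ} (hi : 0 ≤ i) (hin : i < n)
    {w : Equiv.Perm (Flag P.Face)} (hw : w ∈ P.monodromy Set.univ)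
    (hcomm : Commute w (P.exchange i)) {Φ : Flag P.Face} (hwΦ : w Φ = Φ) : w = 1 := by
  have fix_of_sameOrbit {Ψ Λ : Flag P.Face} (hΨ : w Ψ = Ψ) (hΨΛ : P.SameOrbit Ψ Λ) : w Λ = Λ := by
    obtain ⟨f, rfl⟩ := sameOrbit_iff_mem_orbit.1 hΨΛ
    exact (apply_smul_of_mem_monodromy hw f Ψ).trans (congrArg (f • ·) hΨ)
  have hwΦi : w (P.exchange i Φ) = P.exchange i Φ := by
    simpa only [Equiv.Perm.mul_apply, hwΦ] using DFunLike.congr_fun hcomm.eq Φ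
  ext1 Ψ
  by_cases hΦΨ : P.SameOrbit Φ Ψ
  · exact fix_of_sameOrbit hwΦ hΦΨ
  · exact fix_of_sameOrbit hwΦi (h.sameOrbit_of_not_sameOrbit
      (fun hs => h.not_sameOrbit_exchange hi hin Φ hs.symm) hΦΨ)

end Chirality

section LowRank

theorem commute_exchange_of_isKMFlat_zero_one (hflat : P.IsKMFlat 0 1) (hn : 1 ≤ n) (i : ℤ) :
    Commute (P.exchange 0) (P.exchange i) := by
  rcases lt_trichotomy i 0 with hi | rfl | hi
  · rw [exchange_eq_one fun h => h.1.not_gt hi]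
    exact Commute.one_right _
  · exact Commute.refl _
  rcases (Int.add_one_le_of_lt hi).eq_or_lt with rfl | hi
  swap
  · exact commute_exchange (Or.inl hi)
  refine commute_exchange_of_face_eq (by omega) fun Φ => ?_
  have rank_vertex (Ψ : Flag P.Face) : P.rank (P.face Ψ 0) = 0 :=
    rank_face_of_le _ (by omega) (by omega)
  have rank_edge (Ψ : Flag P.Face) : P.rank (P.face Ψ 1) = 1 :=
    rank_face_of_le _ (by omega) (by omega)
  have bot_lt_vertex (Ψ : Flag P.Face) : P.bot < P.face Ψ 0 :=
    face_of_neg Ψ (j := -1) (by omega) ▸ face_lt_face Ψ le_rfl (by omega) (by omega)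
  have vertex_lt_edge (Ψ Λ : Flag P.Face) : P.face Ψ 0 < P.face Λ 1 := by
    refine ((hflat _ _ (rank_vertex Ψ) (rank_edge Λ)).le_of_rank_le ?_).lt_of_ne fun he => ?_
    · rw [rank_vertex, rank_edge]
      exact zero_le_one
    · exact zero_ne_one ((rank_vertex Ψ).symm.trans (he ▸ rank_edge Λ))
  have vertex_ne (Ψ : Flag P.Face) : P.face (P.exchange 0 Ψ) 0 ≠ P.face Ψ 0 :=
    (adjacentAt_exchange le_rfl (by omega) Ψ).1
  have hrank : P.rank (P.face Φ 1) = P.rank P.bot + 2 := by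
    rw [rank_edge, P.rank_bot]
    norm_num
  refine (existsUnique_ne_of_diamond hrank (bot_lt_vertex Φ) (vertex_lt_edge Φ Φ)).unique
    ⟨⟨bot_lt_vertex _, vertex_lt_edge _ _⟩, ?_⟩ ⟨⟨bot_lt_vertex _, vertex_lt_edge _ _⟩, vertex_ne Φ⟩
  rw [← face_exchange_of_ne (i := 0 + 1) (by omega) Φ]
  exact vertex_ne _

theorem IsChiral.not_isKMFlat_zero_one (h : P.IsChiral) (hn : 1 ≤ n) : ¬P.IsKMFlat 0 1 := by
  intro hflat
  obtain ⟨w, hw, -, hne⟩ := h.exists_not_commute_exchange le_rfl (by omega)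
  exact hne (commute_of_mem_monodromy
    (fun i _ => commute_exchange_of_isKMFlat_zero_one hflat hn i) hw)

theorem not_isKMFlat_self {k : ℤ} (hk : 0 ≤ k) (hkn : k < n) : ¬P.IsKMFlat k k := by
  intro hflat
  obtain ⟨Φ, -⟩ := Flag.exists_mem P.bot
  have rank_eq (Ψ : Flag P.Face) : P.rank (P.face Ψ k) = k :=
    rank_face_of_le _ (by omega) (by omega)
  exact (adjacentAt_exchange hk hkn Φ).1 ((hflat _ _ (rank_eq _) (rank_eq _)).eq_of_rank_eq
    ((rank_eq _).trans (rank_eq _).symm))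

theorem IsChiral.sameOrbit_exchange_exchange (h : P.IsChiral) {i j : ℤ} (hi : 0 ≤ i)
    (hin : i < n) (hj : 0 ≤ j) (hjn : j < n) (Φ : Flag P.Face) :
    P.SameOrbit Φ (P.exchange i (P.exchange j Φ)) :=
  h.sameOrbit_of_not_sameOrbit (h.not_sameOrbit_exchange hj hjn Φ)
    (h.not_sameOrbit_exchange hi hin _)

theorem IsChiral.sameOrbit_zpow (h : P.IsChiral) {i j : ℤ} (hi : 0 ≤ i) (hin : i < n)
    (hj : 0 ≤ j) (hjn : j < n) (k : ℤ) (Φ : Flag P.Face) :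
    P.SameOrbit Φ (((P.exchange i * P.exchange j) ^ k) Φ) := by
  revert Φ
  refine zpow_induction_left
    (P := fun w : Equiv.Perm (Flag P.Face) => ∀ Φ, P.SameOrbit Φ (w Φ)) ?_ ?_ ?_ k
  · exact SameOrbit.refl
  · exact fun w hw Φ => (hw Φ).trans (h.sameOrbit_exchange_exchange hi hin hj hjn (w Φ))
  · intro w hw Φ
    rw [mul_inv_rev, exchange_inv, exchange_inv]
    exact (hw Φ).trans (h.sameOrbit_exchange_exchange hj hjn hi hin (w Φ))

theorem mem_zpowers_or_of_mem_monodromy_pair {i j : ℤ} {w : Equiv.Perm (Flag P.Face)}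
    (hw : w ∈ P.monodromy {i, j}) :
    w ∈ Subgroup.zpowers (P.exchange i * P.exchange j) ∨
      w * P.exchange i ∈ Subgroup.zpowers (P.exchange i * P.exchange j) := by
  have hs := Subgroup.mem_zpowers (P.exchange i * P.exchange j)
  refine monodromy_induction (p := fun w => w ∈ Subgroup.zpowers _ ∨ w * _ ∈ Subgroup.zpowers _)
    (Or.inl (one_mem _)) ?_ hw
  rintro w - k (rfl | rfl) hw
  · rw [mul_assoc, exchange_mul_self, mul_one]
    exact hw.symm
  · rcases hw with hw | hw
    · right
      simpa only [mul_inv_rev, exchange_inv, mul_assoc] using mul_mem hw (inv_mem hs)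
    · left
      simpa only [mul_assoc, ← mul_assoc (P.exchange i) (P.exchange i), exchange_mul_self,
        one_mul] using mul_mem hw hs

theorem monodromy_univ_eq : P.monodromy Set.univ = P.monodromy (Set.Ico 0 n) := by
  refine le_antisymm ((Subgroup.closure_le _).2 ?_) (monodromy_mono (Set.subset_univ _))
  rintro _ ⟨i, -, rfl⟩
  by_cases hi : 0 ≤ i ∧ i < (n : ℤ)
  · exact exchange_mem_monodromy hi
  · rw [exchange_eq_one hi]
    exact one_mem _

theorem not_isChiral_of_rank_two (P : AbstractPolytope 2) : ¬P.IsChiral := by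
  intro h
  obtain ⟨w, hw, Φ, hwΦ, hne⟩ := h.exists_monodromy_apply_exchange_ne le_rfl zero_lt_two
  have hIco : Set.Ico 0 ((2 : ℕ) : ℤ) = {0, 1} := by
    ext i
    simp only [Set.mem_Ico, Set.mem_insert_iff, Set.mem_singleton_iff]
    omega
  rw [monodromy_univ_eq, hIco] at hw
  rcases mem_zpowers_or_of_mem_monodromy_pair hw with hw | hw
  · obtain ⟨k, rfl⟩ := Subgroup.mem_zpowers_iff.1 hw
    have hconj : SemiconjBy (P.exchange 0) (P.exchange 0 * P.exchange 1)
        (P.exchange 0 * P.exchange 1)⁻¹ := by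
      rw [SemiconjBy, mul_inv_rev, exchange_inv, exchange_inv, mul_assoc, exchange_mul_self,
        ← mul_assoc, exchange_mul_self, one_mul, mul_one]
    have hconj_zpow := DFunLike.congr_fun (hconj.zpow_right k).eq Φ
    rw [inv_zpow, Equiv.Perm.mul_apply, hwΦ, Equiv.Perm.mul_apply,
      Equiv.Perm.eq_inv_iff_eq] at hconj_zpow
    exact hne hconj_zpow
  · obtain ⟨k, hk⟩ := Subgroup.mem_zpowers_iff.1 hw
    have hsame := h.sameOrbit_zpow le_rfl zero_lt_two zero_le_one one_lt_two k (P.exchange 0 Φ)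
    rw [hk, Equiv.Perm.mul_apply, exchange_exchange, hwΦ] at hsame
    exact h.not_sameOrbit_exchange le_rfl zero_lt_two Φ hsame.symm

theorem IsChiral.three_le (h : P.IsChiral) : 3 ≤ n := by
  by_contra! hn
  interval_cases n
  · obtain ⟨⟨Φ, Ψ, hne, -⟩, -⟩ := h
    have heq : Φ = Ψ := by
      refine face_injective (funext fun j => by_contra fun hj => ?_)
      have := mem_Ico_of_face_ne hj
      omega
    exact hne (heq ▸ SameOrbit.refl Φ)
  · refine h.not_isKMFlat_zero_one le_rfl fun F G _ hG => Or.inl ?_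
    have htop : G = P.top := Incident.eq_of_rank_eq (Or.inl (P.le_top G)) (hG.trans P.rank_top.symm)
    exact htop ▸ P.le_top F
  · exact not_isChiral_of_rank_two P h

end LowRank

section Flatness

theorem IsKMFlat.exists_flag_eqOn_Iic_eqOn_Ici {k m : ℤ} (hflat : P.IsKMFlat k m) (hk : -1 ≤ k)
    (hkm : k ≤ m) (hm : m ≤ n) (Φ Ψ : Flag P.Face) :
    ∃ Λ : Flag P.Face, Set.EqOn (P.face Λ) (P.face Φ) (Set.Iic k) ∧
      Set.EqOn (P.face Λ) (P.face Ψ) (Set.Ici m) := by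
  have hrankΦ : P.rank (P.face Φ k) = k :=
    rank_face_of_le _ (by omega) (by omega)
  have hrankΨ : P.rank (P.face Ψ m) = m :=
    rank_face_of_le _ (by omega) (by omega)
  obtain ⟨Θ, hΘΦ, hΘΨ⟩ := Flag.exists_mem_mem
    ((hflat _ _ hrankΦ hrankΨ).le_of_rank_le (by rwa [hrankΦ, hrankΨ]))
  obtain ⟨Γ, hΓΦ, hΓΘ⟩ := AbstractPolytope.exists_flag_eqOn_Iic_eqOn_Ici
    (face_eq_face_of_mem hΘΦ).symm
  obtain ⟨Λ, hΛΓ, hΛΨ⟩ := AbstractPolytope.exists_flag_eqOn_Iic_eqOn_Ici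
    ((hΓΘ hkm).trans (face_eq_face_of_mem hΘΨ))
  exact ⟨Λ, fun j hj => (hΛΓ (le_trans hj hkm)).trans (hΓΦ hj), hΛΨ⟩

theorem IsChiral.eq_of_apply_eq_of_mem_monodromy_Iio (h : P.IsChiral) (hn : 1 ≤ n)
    {v w : Equiv.Perm (Flag P.Face)} (hv : v ∈ P.monodromy (Set.Iio (n - 2)))
    (hw : w ∈ P.monodromy (Set.Iio (n - 2))) {Φ : Flag P.Face} (hvw : v Φ = w Φ) : v = w := by
  have hmem : v⁻¹ * w ∈ P.monodromy (Set.Iio (n - 2)) := mul_mem (inv_mem hv) hw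
  refine inv_mul_eq_one.1 (h.eq_one_of_commute_exchange (i := n - 1) (by omega) (by omega)
    (monodromy_mono (Set.subset_univ _) hmem) (Φ := Φ)
    (commute_of_mem_monodromy (fun i (hi : i < n - 2) => commute_exchange (by omega)) hmem) ?_)
  rw [Equiv.Perm.mul_apply, ← hvw, Equiv.Perm.inv_eq_iff_eq]

theorem IsChiral.exists_mul_of_mem_monodromy_Iio (h : P.IsChiral) {k m : ℤ} (hk : -1 ≤ k)
    (hkm : k ≤ m) (hmn : m ≤ n - 3) (hflat : P.IsKMFlat k m) {w : Equiv.Perm (Flag P.Face)}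
    (hw : w ∈ P.monodromy (Set.Iio (m + 1))) :
    ∃ b ∈ P.monodromy (Set.Ioi k), ∃ a ∈ P.monodromy (Set.Iio m), b * a = w := by
  obtain ⟨Φ, -⟩ := h.1
  obtain ⟨Λ, hΛw, hΛΦ⟩ := hflat.exists_flag_eqOn_Iic_eqOn_Ici hk hkm (by omega) (w Φ) Φ
  obtain ⟨a, ha, haΦ⟩ : ∃ a ∈ P.monodromy (Set.Iio m), a Φ = Λ :=
    exists_mem_monodromy_apply_eq (by simpa using hΛΦ)
  obtain ⟨b, hb, hbΛ⟩ : ∃ b ∈ P.monodromy (Set.Ioo k (m + 1)), b Λ = w Φ := by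
    refine exists_mem_monodromy_apply_eq fun j hj => ?_
    by_cases hjk : j ≤ k
    · exact (hΛw hjk).symm
    · have hmj : m + 1 ≤ j := by
        by_contra hjm
        exact hj ⟨not_le.1 hjk, not_le.1 hjm⟩
      exact (eqOn_face_of_mem_monodromy hw Φ hmj.not_gt).trans
        (hΛΦ (Set.mem_Ici.2 (by omega))).symm
  refine ⟨b, monodromy_mono (fun _ hi => hi.1) hb, a, ha,
    h.eq_of_apply_eq_of_mem_monodromy_Iio (by omega) (Φ := Φ)
      (mul_mem (monodromy_mono (fun _ hi => ?_) hb) (monodromy_mono (fun _ hi => ?_) ha))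
      (monodromy_mono (fun _ hi => ?_) hw) (by rw [Equiv.Perm.mul_apply, haΦ, hbΛ])⟩ <;>
  simp only [Set.mem_Ioo, Set.mem_Iio] at hi ⊢ <;> omega

theorem IsChiral.exists_mul_of_mem_monodromy_univ (h : P.IsChiral) {k m : ℤ} (hk : -1 ≤ k)
    (hkm : k ≤ m) (hmn : m ≤ n - 3) (hflat : P.IsKMFlat k m) {w : Equiv.Perm (Flag P.Face)}
    (hw : w ∈ P.monodromy Set.univ) :
    ∃ b ∈ P.monodromy (Set.Ioi k), ∃ a ∈ P.monodromy (Set.Iio m), b * a = w := by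
  refine monodromy_induction
    (p := fun w => ∃ b ∈ P.monodromy (Set.Ioi k), ∃ a ∈ P.monodromy (Set.Iio m), b * a = w)
    ⟨1, one_mem _, 1, one_mem _, one_mul 1⟩ ?_ hw
  rintro _ - i - ⟨b, hb, a, ha, rfl⟩
  rcases le_or_gt i m with him | hmi
  · have hmem : a * P.exchange i ∈ P.monodromy (Set.Iio (m + 1)) :=
      mul_mem (monodromy_mono (Set.Iio_subset_Iio (by omega)) ha)
        (exchange_mem_monodromy (Set.mem_Iio.2 (by omega)))
    obtain ⟨b', hb', a', ha', hab⟩ := h.exists_mul_of_mem_monodromy_Iio hk hkm hmn hflat hmem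
    exact ⟨b * b', mul_mem hb hb', a', ha', by rw [mul_assoc, hab, mul_assoc]⟩
  · have hcomm : Commute a (P.exchange i) :=
      commute_of_mem_monodromy (fun j (hj : j < m) => commute_exchange (by omega)) ha
    exact ⟨b * P.exchange i, mul_mem hb (exchange_mem_monodromy (hkm.trans_lt hmi)), a, ha,
      by rw [mul_assoc, ← hcomm.eq, mul_assoc]⟩

theorem IsChiral.not_isKMFlat (h : P.IsChiral) {k m : ℤ} (hk : 1 ≤ k) (hkm : k < m)
    (hmn : m ≤ n - 3) : ¬P.IsKMFlat k m := by
  intro hflat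
  obtain ⟨_, hw, ⟨Φ, hfix⟩, hne⟩ := h.exists_not_commute_exchange le_rfl (by omega)
  obtain ⟨b, hb, a, ha, rfl⟩ :=
    h.exists_mul_of_mem_monodromy_univ (by omega) hkm.le hmn hflat hw
  have haΦ : a Φ = b⁻¹ Φ := Equiv.Perm.eq_inv_iff_eq.2 hfix
  obtain ⟨c, hc, hcΦ⟩ : ∃ c ∈ P.monodromy (Set.Ioo k m), c Φ = a Φ := by
    refine exists_mem_monodromy_apply_eq fun j hj => ?_
    by_cases hjm : j < m
    · rw [haΦ]
      exact eqOn_face_of_mem_monodromy (inv_mem hb) Φ fun hkj => hj ⟨hkj, hjm⟩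
    · exact eqOn_face_of_mem_monodromy ha Φ hjm
  have hca : c = a := h.eq_of_apply_eq_of_mem_monodromy_Iio (by omega)
    (monodromy_mono (fun i hi => hi.2.trans_le (by omega)) hc)
    (monodromy_mono (Set.Iio_subset_Iio (by omega)) ha) hcΦ
  subst hca
  exact hne (commute_of_mem_monodromy (fun i (hi : k < i) => commute_exchange (by omega))
    (mul_mem hb (monodromy_mono (fun i hi => hi.1) hc)))

theorem IsChiral.not_isKMFlat_one (h : P.IsChiral) : ¬P.IsKMFlat 1 ((n : ℤ) - 3) := by
  have hn := h.three_le
  intro hflat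
  rcases lt_trichotomy ((n : ℤ) - 3) 1 with hlt | heq | hgt
  · rw [show (n : ℤ) - 3 = 0 by omega] at hflat
    exact h.not_isKMFlat_zero_one (by omega) hflat.symm
  · rw [heq] at hflat
    exact not_isKMFlat_self zero_le_one (by omega) hflat
  · exact h.not_isKMFlat le_rfl hgt le_rfl hflat

end Flatness

section Duality

/-- The dual polytope: the opposite order on the faces, a face of rank `k` having rank `n - 1 - k`
in the dual. -/
def dual (P : AbstractPolytope n) : AbstractPolytope n where
  Face := P.Faceᵒᵈ
  rank F := n - 1 - P.rank (OrderDual.ofDual F)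
  bot := OrderDual.toDual P.top
  top := OrderDual.toDual P.bot
  bot_le := P.le_top
  le_top := P.bot_le
  rank_bot := by
    rw [OrderDual.ofDual_toDual, P.rank_top]
    ring
  rank_top := by
    rw [OrderDual.ofDual_toDual, P.rank_bot]
    ring
  rank_strictMono F G h := sub_lt_sub_left (P.rank_strictMono G F h) _
  flag_card Φ := P.flag_card ((flagDual _).symm Φ)
  flag_ranks Φ j hj hjn := by
    obtain ⟨F, hF, hFj⟩ := P.flag_ranks ((flagDual _).symm Φ) (n - 1 - j) (by omega) (by omega)
    exact ⟨OrderDual.toDual F, hF, by rw [OrderDual.ofDual_toDual, hFj]; ring⟩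
  diamond F G h hrank := by
    have hcard := P.diamond (OrderDual.ofDual G) (OrderDual.ofDual F) h (by omega)
    exact (Nat.card_congr (Equiv.subtypeEquivRight fun _ => and_comm)).trans hcard
  strongly_connected F G h hrank H H' hFH hHG hFH' hH'G := by
    refine Relation.ReflTransGen.mono ?_ _ _ (P.strongly_connected (OrderDual.ofDual G)
      (OrderDual.ofDual F) h (by omega) (OrderDual.ofDual H) (OrderDual.ofDual H')
      hHG hFH hH'G hFH')
    rintro A B ⟨hGA, hAF, hGB, hBF, hAB⟩
    exact ⟨hAF, hGA, hBF, hGB, hAB.symm⟩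

/-- The identification of the flags of `P` with the flags of its dual. -/
def dualFlag : Flag P.Face ≃ Flag P.dual.Face := flagDual P.Face

theorem adjacentFlags_dualFlag {Φ Ψ : Flag P.Face} :
    P.dual.AdjacentFlags (dualFlag Φ) (dualFlag Ψ) ↔ P.AdjacentFlags Φ Ψ :=
  and_congr dualFlag.injective.ne_iff Iff.rfl

theorem sameOrbit_dualFlag {Φ Ψ : Flag P.Face} :
    P.dual.SameOrbit (dualFlag Φ) (dualFlag Ψ) ↔ P.SameOrbit Φ Ψ :=
  ⟨fun ⟨f, hf⟩ =>
      ⟨((OrderIso.dualDual P.Face).trans f.dual).trans (OrderIso.dualDual P.Face).symm, hf⟩,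
    fun ⟨f, hf⟩ => ⟨f.dual, hf⟩⟩

theorem IsChiral.dual (h : P.IsChiral) : P.dual.IsChiral := by
  obtain ⟨⟨Φ₁, Φ₂, hne, hor⟩, hadj⟩ := h
  refine ⟨⟨dualFlag Φ₁, dualFlag Φ₂, sameOrbit_dualFlag.not.2 hne, ?_⟩, ?_⟩
  · refine dualFlag.surjective.forall.2 fun Φ => ?_
    exact (hor Φ).imp sameOrbit_dualFlag.2 sameOrbit_dualFlag.2
  · refine dualFlag.surjective.forall₂.2 fun Φ Ψ hΦΨ => ?_
    exact sameOrbit_dualFlag.not.2 (hadj Φ Ψ (adjacentFlags_dualFlag.1 hΦΨ))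

theorem IsKMFlat.dual {k m : ℤ} (h : P.IsKMFlat k m) :
    P.dual.IsKMFlat (n - 1 - k) (n - 1 - m) :=
  fun F G hF hG => (h (OrderDual.ofDual F) (OrderDual.ofDual G) (sub_right_injective hF)
    (sub_right_injective hG)).symm

theorem IsChiral.not_isKMFlat_two (h : P.IsChiral) : ¬P.IsKMFlat 2 ((n : ℤ) - 2) := by
  intro hflat
  refine h.dual.not_isKMFlat_one ?_
  convert hflat.dual.symm using 1 <;> ring

end Duality

end AbstractPolytope

theorem chiral_flatness_restriction_general (n : ℕ) (P : AbstractPolytope n)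
    (hchiral : P.IsChiral) :
    ¬ P.IsKMFlat 1 ((n : ℤ) - 3) ∧ ¬ P.IsKMFlat 2 ((n : ℤ) - 2) :=
  ⟨hchiral.not_isKMFlat_one, hchiral.not_isKMFlat_two⟩

/-- There are no finite chiral `n`-polytopes that are
`(1, n-3)`-flat, and there are no finite chiral `n`-polytopes that are
`(2, n-2)`-flat. -/
theorem chiral_flatness_restriction
    (n : ℕ) (P : AbstractPolytope n) (hfin : Finite P.Face)
    (hchiral : P.IsChiral) :
    ¬ P.IsKMFlat 1 ((n : ℤ) - 3) ∧ ¬ P.IsKMFlat 2 ((n : ℤ) - 2) := by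
  exact chiral_flatness_restriction_general n P hchiral
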